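/- There is an absolute constant C such that the following holds. Let Q ≥ 1, let u₂ be a rational integer with Q/√2 < u₂ ≤ Q, and let x₂, y₂ ∈ ℤ be such that x₂ + y₂·i and u₂ are coprime in Z[i]. Let γ ∈ ℤ, let U, V ≥ 0 be real, and set d = gcd(x₂, u₂). Then #{(α,β) ∈ ℤ² : |α| ≤ U, |β| ≤ V, α·x₂ − β·y₂ ≡ γ (mod u₂)} ≤ C·(1 + V/d)·(1 + U·d/u₂); in particular this count is ≤ C'·(1 + U + V + U·V/Q) for an absolute constant C'. -/

import Mathlib

noncomputable section

/-- Two Gaussian integers are coprime if their only common divisors are units. -/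
def GCoprime (r q : GaussianInt) : Prop :=
  ∀ d : GaussianInt, d ∣ r → d ∣ q → IsUnit d

lemma count_aux (S : Finset ℤ) (U : ℝ) (m : ℤ) (hm : 0 < m) (hU : 0 ≤ U)
    (h1 : ∀ a ∈ S, |(a : ℝ)| ≤ U) (h2 : ∀ a ∈ S, ∀ b ∈ S, m ∣ a - b) :
    (S.card : ℝ) ≤ 2 * (1 + U / m) := by
  rcases S.eq_empty_or_nonempty with rfl | ⟨a0, ha0⟩
  · have hmR : (0 : ℝ) < m := by exact_mod_cast hm
    simp only [Finset.card_empty, Nat.cast_zero]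
    positivity
  have hmR : (0 : ℝ) < m := by exact_mod_cast hm
  have hinj : S.card ≤ (Finset.Icc ⌊-(U / m)⌋ ⌊U / m⌋).card := by
    apply Finset.card_le_card_of_injOn (fun a : ℤ => ⌊(a : ℝ) / m⌋)
    · intro a ha
      have := abs_le.1 (h1 a ha)
      simp only [Finset.coe_Icc, Set.mem_Icc]
      constructor
      · apply Int.floor_le_floor
        rw [← neg_div]
        gcongr
        exact this.1
      · apply Int.floor_le_floor
        gcongr
        exact this.2
    · intro a ha b hb hab
      obtain ⟨k, hk⟩ := h2 a ha b hb
      have := Int.abs_sub_lt_one_of_floor_eq_floor hab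
      have h3 : (a : ℝ) / m - b / m = k := by
        have : (a : ℝ) - b = m * k := by exact_mod_cast hk
        field_simp
        linarith
      rw [h3] at this
      have hk0 : |k| < 1 := by exact_mod_cast this
      rw [Int.abs_lt_one_iff] at hk0
      subst hk0
      omega
  rw [Int.card_Icc] at hinj
  have hnn : 0 ≤ U / m := by positivity
  have hle : ⌊-(U / m)⌋ ≤ ⌊U / m⌋ := Int.floor_le_floor (by linarith)
  have h4 : (S.card : ℤ) ≤ ⌊U / m⌋ + 1 - ⌊-(U / m)⌋ := by omega
  have h5 : (S.card : ℝ) ≤ ⌊U / m⌋ + 1 - ⌊-(U / m)⌋ := by exact_mod_cast h4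
  have h6 := Int.floor_le (U / (m : ℝ))
  have h7 := Int.sub_one_lt_floor (-(U / (m : ℝ)))
  linarith

lemma cop_aux (x y u : ℤ) (h : GCoprime ⟨x, y⟩ (⟨u, 0⟩ : GaussianInt)) :
    IsCoprime ((Int.gcd x u : ℕ) : ℤ) y := by
  rw [Int.isCoprime_iff_gcd_eq_one]
  set g := Int.gcd ((Int.gcd x u : ℕ) : ℤ) y with hg
  have hgd : (g : ℤ) ∣ (Int.gcd x u : ℕ) := Int.gcd_dvd_left ..
  have hgy : (g : ℤ) ∣ y := Int.gcd_dvd_right ..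
  have hgx : (g : ℤ) ∣ x := hgd.trans (Int.gcd_dvd_left ..)
  have hgu : (g : ℤ) ∣ u := hgd.trans (Int.gcd_dvd_right ..)
  have hu := h (((g : ℤ)) : GaussianInt)
    ((Zsqrtd.intCast_dvd _ _).2 ⟨hgx, hgy⟩) ((Zsqrtd.intCast_dvd _ _).2 ⟨hgu, dvd_zero _⟩)
  have := (Zsqrtd.norm_eq_one_iff).2 hu
  rw [Zsqrtd.norm_intCast, Int.natAbs_mul, Int.natAbs_natCast] at this
  exact Nat.eq_one_of_mul_eq_one_left this

lemma main_aux (x y u γ : ℤ) (hu : 0 < u) (h : GCoprime ⟨x, y⟩ (⟨u, 0⟩ : GaussianInt))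
    (U V : ℝ) (hU : 0 ≤ U) (hV : 0 ≤ V) :
    (Set.ncard {p : ℤ × ℤ | |(p.1 : ℝ)| ≤ U ∧ |(p.2 : ℝ)| ≤ V ∧
          p.1 * x - p.2 * y ≡ γ [ZMOD u]} : ℝ)
        ≤ 4 * (1 + V / (Int.gcd x u : ℝ)) * (1 + U * (Int.gcd x u : ℝ) / (u : ℝ)) := by
  set d : ℕ := Int.gcd x u with hd
  have hcop : IsCoprime (d : ℤ) y := cop_aux x y u h
  have hdpos : 0 < d := Int.gcd_pos_of_ne_zero_right _ hu.ne'
  obtain ⟨m, hm⟩ : (d : ℤ) ∣ u := Int.gcd_dvd_right ..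
  obtain ⟨x', hx'⟩ : (d : ℤ) ∣ x := Int.gcd_dvd_left ..
  have hdZ : (0 : ℤ) < d := by exact_mod_cast hdpos
  have hmpos : 0 < m := by
    rw [hm] at hu
    exact pos_of_mul_pos_right hu hdZ.le
  have hmx : IsCoprime m x' := by
    rw [Int.isCoprime_iff_gcd_eq_one]
    have : Int.gcd x u = d * Int.gcd x' m := by
      rw [hx', hm, Int.gcd_mul_left, Int.natAbs_natCast]
    rw [← hd] at this
    rw [Int.gcd_comm]
    exact Nat.eq_of_mul_eq_mul_left hdpos (by omega)
  set T := {p : ℤ × ℤ | |(p.1 : ℝ)| ≤ U ∧ |(p.2 : ℝ)| ≤ V ∧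
          p.1 * x - p.2 * y ≡ γ [ZMOD u]} with hT
  have hfin : T.Finite := by
    apply ((Set.finite_Icc (-⌊U⌋) ⌊U⌋).prod (Set.finite_Icc (-⌊V⌋) ⌊V⌋)).subset
    rintro ⟨a, b⟩ ⟨h1, h2, -⟩
    have key : ∀ (a : ℤ) (U : ℝ), |(a : ℝ)| ≤ U → a ∈ Set.Icc (-⌊U⌋) ⌊U⌋ := by
      intro a U h
      have : |a| ≤ ⌊U⌋ := Int.le_floor.2 (by exact_mod_cast h)
      exact abs_le.1 this
    exact ⟨key _ _ h1, key _ _ h2⟩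
  rw [Set.ncard_eq_toFinset_card T hfin]
  set F := hfin.toFinset with hF
  have hmem : ∀ p ∈ F, |(p.1 : ℝ)| ≤ U ∧ |(p.2 : ℝ)| ≤ V ∧ u ∣ γ - (p.1 * x - p.2 * y) := by
    intro p hp
    have : p ∈ T := by simpa [hF] using hp
    exact ⟨this.1, this.2.1, this.2.2.dvd⟩
  have hB : ((F.image Prod.snd).card : ℝ) ≤ 2 * (1 + V / (d : ℤ)) := by
    apply count_aux _ _ _ hdZ hV
    · intro a ha
      obtain ⟨p, hp, rfl⟩ := Finset.mem_image.1 ha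
      exact (hmem p hp).2.1
    · intro a ha b hb
      obtain ⟨p, hp, rfl⟩ := Finset.mem_image.1 ha
      obtain ⟨q, hq, rfl⟩ := Finset.mem_image.1 hb
      obtain ⟨k, hk⟩ := (hmem p hp).2.2
      obtain ⟨l, hl⟩ := (hmem q hq).2.2
      apply hcop.dvd_of_dvd_mul_right
      refine ⟨m * k - m * l + p.1 * x' - q.1 * x', ?_⟩
      rw [hm, hx'] at hk hl
      linear_combination hk - hl
  have hA : ∀ b ∈ F.image Prod.snd,
      (F.filter (fun p => p.2 = b)).card ≤ ⌊2 * (1 + U / m)⌋₊ := by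
    intro b _
    apply Nat.le_floor
    rw [← Finset.card_image_of_injOn (f := Prod.fst)]
    · apply count_aux _ _ _ hmpos hU
      · intro a ha
        obtain ⟨p, hp, rfl⟩ := Finset.mem_image.1 ha
        exact (hmem p (Finset.mem_filter.1 hp).1).1
      · intro a ha b hb
        obtain ⟨p, hp, rfl⟩ := Finset.mem_image.1 ha
        obtain ⟨q, hq, rfl⟩ := Finset.mem_image.1 hb
        obtain ⟨hp, hpb⟩ := Finset.mem_filter.1 hp
        obtain ⟨hq, hqb⟩ := Finset.mem_filter.1 hq
        obtain ⟨k, hk⟩ := (hmem p hp).2.2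
        obtain ⟨l, hl⟩ := (hmem q hq).2.2
        apply hmx.dvd_of_dvd_mul_right
        refine ⟨l - k, ?_⟩
        rw [hm, hx'] at hk hl
        rw [hpb] at hk
        rw [hqb] at hl
        apply mul_left_cancel₀ hdZ.ne'
        linear_combination hl - hk
    · intro p hp q hq hpq
      have hp := (Finset.mem_filter.1 hp).2
      have hq := (Finset.mem_filter.1 hq).2
      exact Prod.ext hpq (hp.trans hq.symm)
  have hcard := Finset.card_le_mul_card_image (f := Prod.snd) F _ hA
  have hmR : (0 : ℝ) < m := by exact_mod_cast hmpos
  have hdR : (0 : ℝ) < d := by exact_mod_cast hdpos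
  have hfl : (⌊2 * (1 + U / m)⌋₊ : ℝ) ≤ 2 * (1 + U / m) := Nat.floor_le (by positivity)
  have huR : (u : ℝ) = d * m := by exact_mod_cast hm
  have e : U * d / u = U / m := by
    rw [huR]; field_simp
  rw [e]
  calc (F.card : ℝ) ≤ (⌊2 * (1 + U / m)⌋₊ : ℝ) * ((F.image Prod.snd).card : ℝ) := by
        exact_mod_cast hcard
    _ ≤ (2 * (1 + U / m)) * (2 * (1 + V / (d : ℤ))) := mul_le_mul hfl hB (Nat.cast_nonneg _) (by positivity)
    _ = _ := by push_cast; ring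

/-- Counting lattice points `(α,β)` with `|α| ≤ U`, `|β| ≤ V` and
`α x₂ - β y₂ ≡ γ (mod u₂)`. -/
theorem congruence_count :
    ∃ C : ℝ, 0 < C ∧ ∃ C' : ℝ, 0 < C' ∧
      ∀ Q : ℝ, 1 ≤ Q → ∀ u₂ : ℤ, Q / Real.sqrt 2 < (u₂ : ℝ) → (u₂ : ℝ) ≤ Q →
      ∀ x₂ y₂ : ℤ, GCoprime ⟨x₂, y₂⟩ (⟨u₂, 0⟩ : GaussianInt) →
      ∀ γ : ℤ, ∀ U V : ℝ, 0 ≤ U → 0 ≤ V →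
      (Set.ncard {p : ℤ × ℤ | |(p.1 : ℝ)| ≤ U ∧ |(p.2 : ℝ)| ≤ V ∧
          p.1 * x₂ - p.2 * y₂ ≡ γ [ZMOD u₂]} : ℝ)
        ≤ C * (1 + V / (Int.gcd x₂ u₂ : ℝ)) * (1 + U * (Int.gcd x₂ u₂ : ℝ) / (u₂ : ℝ)) ∧
      (Set.ncard {p : ℤ × ℤ | |(p.1 : ℝ)| ≤ U ∧ |(p.2 : ℝ)| ≤ V ∧
          p.1 * x₂ - p.2 * y₂ ≡ γ [ZMOD u₂]} : ℝ)
        ≤ C' * (1 + U + V + U * V / Q) := by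
  refine ⟨4, by norm_num, 8, by norm_num, ?_⟩
  intro Q hQ u hu1 hu2 x y h γ U V hU hV
  have hQ0 : 0 < Q := by linarith
  have huR : (0 : ℝ) < u := lt_trans (by positivity) hu1
  have hu : 0 < u := by exact_mod_cast huR
  have hmain := main_aux x y u γ hu h U V hU hV
  refine ⟨hmain, hmain.trans ?_⟩
  have hd1 : (1 : ℝ) ≤ (Int.gcd x u : ℝ) := by
    exact_mod_cast Int.gcd_pos_of_ne_zero_right x hu.ne'
  have hdu : (Int.gcd x u : ℝ) ≤ u := by
    have : ((Int.gcd x u : ℕ) : ℤ) ≤ u := Int.le_of_dvd hu (Int.gcd_dvd_right ..)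
    exact_mod_cast this
  set d : ℝ := (Int.gcd x u : ℝ) with hd
  have hd0 : 0 < d := by linarith
  have h1 : V / d ≤ V := div_le_self hV hd1
  have h2 : U * d / u ≤ U := by
    rw [div_le_iff₀ huR]
    gcongr
  have hs : Real.sqrt 2 ≤ 2 := by
    rw [Real.sqrt_le_left (by norm_num)]; norm_num
  have hQu : Q ≤ 2 * u := by
    rw [div_lt_iff₀ (by positivity)] at hu1
    nlinarith
  have h3 : V / d * (U * d / u) ≤ 2 * (U * V / Q) := by
    have e : V / d * (U * d / u) = U * V / u := by field_simp
    rw [e, ← mul_div_assoc, div_le_div_iff₀ huR hQ0]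
    nlinarith [mul_nonneg hU hV]
  have h4 : 0 ≤ U * V / Q := by positivity
  nlinarith
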